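/- Let n ≥ 2, let D be a digital n-object, and let e be an (n−2)-hub of D. Then b_{n−1}(e, D) = 4, i.e. exactly 4 free (n−1)-cells of D are bounded by e. -/

import Mathlib

/-!
The cells of dimension `cdim e + 1` bounded by `e` arise by moving `e` one step up or down in one
of its `n - cdim e` even coordinates, so there are `2 * (n - cdim e)` of them. Suppose that
`cdim e + 1 < n` and that the only voxels of `D` around `e` are two voxels `v`, `w` meeting exactly
in `e`. In every even coordinate of `e` they lie on opposite sides of `e`, so each of these cells
bounds `v` or `w`. The block of such a cell has at least two voxels, so it cannot lie inside `D`: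
otherwise the cell would bound both `v` and `w`, hence lie in their intersection `e`. So all these
cells are free. A hub is the case `cdim e = n - 2`.
-/

namespace DigitalGeometry

/-- The dimension of a cell of the cubical grid (doubled coordinates):
the number of odd coordinates. -/
def cdim {n : ℕ} (c : Fin n → ℤ) : ℕ :=
  (Finset.univ.filter fun j => Odd (c j)).card

/-- The bounding relation `e < f` between cells of the grid. -/
def Bounds {n : ℕ} (e f : Fin n → ℤ) : Prop :=
  cdim e < cdim f ∧ ∀ j, e j = f j ∨ (Odd (f j) ∧ |e j - f j| = 1)

/-- A voxel is an `n`-cell: all coordinates odd. -/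
def IsVoxel {n : ℕ} (v : Fin n → ℤ) : Prop := ∀ j, Odd (v j)

/-- The `i`-block centered on an `i`-cell `e`: all voxels bounded by `e`. -/
def Block {n : ℕ} (e : Fin n → ℤ) : Set (Fin n → ℤ) :=
  {v | IsVoxel v ∧ Bounds e v}

/-- `Cells D i` : the `i`-cells of the object `D` (for `i < n` those bounding
some voxel of `D`; for `i = n` it is `D` itself). -/
def Cells {n : ℕ} (D : Set (Fin n → ℤ)) (i : ℕ) : Set (Fin n → ℤ) :=
  {e | cdim e = i ∧ (e ∈ D ∨ ∃ v ∈ D, Bounds e v)}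

/-- `c_i(D)` : the number of `i`-cells of `D`. -/
noncomputable def cCount {n : ℕ} (D : Set (Fin n → ℤ)) (i : ℕ) : ℕ := (Cells D i).ncard

/-- The free `i`-cells of `D`: those whose `i`-block is not contained in `D`. -/
def FreeCells {n : ℕ} (D : Set (Fin n → ℤ)) (i : ℕ) : Set (Fin n → ℤ) :=
  {e | e ∈ Cells D i ∧ ¬ Block e ⊆ D}

/-- `c*_i(D)` : the number of free `i`-cells of `D`. -/
noncomputable def cStar {n : ℕ} (D : Set (Fin n → ℤ)) (i : ℕ) : ℕ := (FreeCells D i).ncard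

/-- The non-free `i`-cells of `D`. -/
def NonFreeCells {n : ℕ} (D : Set (Fin n → ℤ)) (i : ℕ) : Set (Fin n → ℤ) :=
  {e | e ∈ Cells D i ∧ Block e ⊆ D}

/-- `c'_i(D)` : the number of non-free `i`-cells of `D`. -/
noncomputable def cPrime {n : ℕ} (D : Set (Fin n → ℤ)) (i : ℕ) : ℕ := (NonFreeCells D i).ncard

/-- `InterCell v1 v2 e` : the intersection of the voxels `v1`, `v2`
(as subsets of `ℝ^n`) equals the cell `e`. -/
def InterCell {n : ℕ} (v1 v2 e : Fin n → ℤ) : Prop :=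
  ∀ j, (v1 j = v2 j ∧ e j = v1 j) ∨
       (e j + 1 = max (v1 j) (v2 j) ∧ e j - 1 = min (v1 j) (v2 j))

/-- `e` is an `(n-2)`-hub of `D`, i.e. `D` has an `(n-2)`-gap over `e`. -/
def IsHub {n : ℕ} (D : Set (Fin n → ℤ)) (e : Fin n → ℤ) : Prop :=
  cdim e = n - 2 ∧ ∃ v1 v2 : Fin n → ℤ, v1 ≠ v2 ∧
    Block e ∩ D = {v1, v2} ∧ InterCell v1 v2 e

/-- `g_{n-2}(D)` : the number of `(n-2)`-gaps of `D`. -/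
noncomputable def gapCount {n : ℕ} (D : Set (Fin n → ℤ)) : ℕ := {e | IsHub D e}.ncard

/-- `b_j(e, D)` : the number of free `j`-cells of `D` bounded by `e`. -/
noncomputable def bcount {n : ℕ} (e : Fin n → ℤ) (D : Set (Fin n → ℤ)) (j : ℕ) : ℕ :=
  {f | f ∈ FreeCells D j ∧ Bounds e f}.ncard

/-- Two voxels are `i`-adjacent if they are distinct and their intersection
contains an `i`-cell. -/
def Adj {n : ℕ} (i : ℕ) (v1 v2 : Fin n → ℤ) : Prop :=
  v1 ≠ v2 ∧ ∃ e : Fin n → ℤ, cdim e = i ∧ Bounds e v1 ∧ Bounds e v2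

section

variable {n : ℕ} {c e f g v w : Fin n → ℤ} {D : Set (Fin n → ℤ)} {a j : Fin n}

/-- The even coordinates of a cell, i.e. the directions in which it is degenerate; their number
is the codimension of the cell. -/
def evenCoords (c : Fin n → ℤ) : Finset (Fin n) :=
  Finset.univ.filter fun j => Even (c j)

theorem mem_evenCoords : j ∈ evenCoords c ↔ Even (c j) := by
  simp [evenCoords]

theorem cdim_add_card_evenCoords (c : Fin n → ℤ) : cdim c + (evenCoords c).card = n := by
  simpa [cdim, evenCoords] using
    Finset.card_filter_add_card_filter_not (s := Finset.univ) fun j => Odd (c j)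

theorem exists_even_of_cdim_lt (hc : cdim c < n) : ∃ j, Even (c j) := by
  have hpos : 0 < (evenCoords c).card := by
    have := cdim_add_card_evenCoords c
    omega
  obtain ⟨j, hj⟩ := Finset.card_pos.1 hpos
  exact ⟨j, mem_evenCoords.1 hj⟩

theorem IsVoxel.cdim_eq (hv : IsVoxel v) : cdim v = n := by
  simp [cdim, Finset.filter_true_of_mem fun j _ => hv j]

theorem Bounds.even_of_ne (h : Bounds e f) (hj : e j ≠ f j) : Even (e j) := by
  obtain ⟨hodd, habs⟩ := (h.2 j).resolve_left hj
  have hdiff : Odd (e j - f j) := by rw [← odd_abs, habs]; exact odd_one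
  simpa using hdiff.add_odd hodd

theorem Bounds.apply_eq_of_odd (h : Bounds e f) (hj : Odd (e j)) : e j = f j :=
  by_contra fun hne => Int.not_even_iff_odd.2 hj (h.even_of_ne hne)

theorem Bounds.ne_iff (h : Bounds e f) : e j ≠ f j ↔ Even (e j) ∧ Odd (f j) :=
  ⟨fun hne => ⟨h.even_of_ne hne, ((h.2 j).resolve_left hne).1⟩,
    fun ⟨he, hf⟩ heq => Int.not_even_iff_odd.2 hf (heq ▸ he)⟩

theorem Bounds.card_filter_ne (h : Bounds e f) :
    (Finset.univ.filter fun j => e j ≠ f j).card = cdim f - cdim e := by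
  have hsub : (Finset.univ.filter fun j => Odd (e j)) ⊆ Finset.univ.filter fun j => Odd (f j) :=
    Finset.monotone_filter_right _ fun _ _ hj => h.apply_eq_of_odd hj ▸ hj
  rw [cdim, cdim, ← Finset.card_sdiff_of_subset hsub]
  congr 1
  ext j
  simp [-ne_eq, h.ne_iff, and_comm]

theorem Bounds.trans (hef : Bounds e f) (hfg : Bounds f g) : Bounds e g := by
  refine ⟨hef.1.trans hfg.1, fun j => ?_⟩
  rcases hef.2 j with hj | ⟨hodd, habs⟩
  · exact hj ▸ hfg.2 j
  · rw [← hfg.apply_eq_of_odd hodd]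
    exact Or.inr ⟨hodd, habs⟩

theorem Bounds.block_subset (h : Bounds e f) : Block f ⊆ Block e :=
  fun _ hv => ⟨hv.1, h.trans hv.2⟩

theorem odd_units_val (s : ℤˣ) : Odd (s : ℤ) := by
  rcases Int.units_eq_one_or s with rfl | rfl <;> decide

theorem block_nontrivial (hc : cdim c < n) : (Block c).Nontrivial := by
  have corner_mem (s : ℤˣ) : (fun j => if Even (c j) then c j + s else c j) ∈ Block c := by
    have hvox : IsVoxel fun j => if Even (c j) then c j + s else c j := fun j => by
      by_cases hj : Even (c j)
      · simpa only [if_pos hj] using hj.add_odd (odd_units_val s)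
      · simpa only [if_neg hj, Int.not_even_iff_odd] using hj
    refine ⟨hvox, hvox.cdim_eq.symm ▸ hc, fun j => ?_⟩
    by_cases hj : Even (c j)
    · exact Or.inr ⟨hvox j, by simp [hj, Int.isUnit_iff_abs_eq.1 s.isUnit]⟩
    · simp [hj]
  obtain ⟨b, hb⟩ := exists_even_of_cdim_lt hc
  refine ⟨_, corner_mem 1, _, corner_mem (-1), fun h => ?_⟩
  have hb' := congrFun h b
  simp only [if_pos hb, Units.val_one, Units.val_neg] at hb'
  omega

theorem cdim_add_single (ha : Even (e a)) (s : ℤˣ) :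
    cdim (e + Pi.single a (s : ℤ)) = cdim e + 1 := by
  have hfilter : (Finset.univ.filter fun j => Odd ((e + Pi.single a (s : ℤ) : Fin n → ℤ) j)) =
      insert a (Finset.univ.filter fun j => Odd (e j)) := by
    ext j
    rcases eq_or_ne j a with rfl | hj
    · simp [ha.add_odd (odd_units_val s)]
    · simp [hj]
  rw [cdim, hfilter, Finset.card_insert_of_notMem (by simpa using ha), cdim]

theorem bounds_add_single (ha : Even (e a)) (s : ℤˣ) :
    Bounds e (e + Pi.single a (s : ℤ)) := by
  refine ⟨by rw [cdim_add_single ha]; omega, fun j => ?_⟩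
  rcases eq_or_ne j a with rfl | hj
  · exact Or.inr ⟨by simpa using ha.add_odd (odd_units_val s),
      by simp [Int.isUnit_iff_abs_eq.1 s.isUnit]⟩
  · simp [hj]

theorem Bounds.exists_eq_add_single (h : Bounds e f) (hdim : cdim f = cdim e + 1) :
    ∃ a, Even (e a) ∧ ∃ s : ℤˣ, f = e + Pi.single a (s : ℤ) := by
  obtain ⟨a, ha⟩ : ∃ a, (Finset.univ.filter fun j => e j ≠ f j) = {a} := by
    rw [← Finset.card_eq_one, h.card_filter_ne]
    omega
  have hiff (j : Fin n) : e j ≠ f j ↔ j = a := by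
    simpa using Finset.ext_iff.1 ha j
  have hne : e a ≠ f a := (hiff a).2 rfl
  have hunit : IsUnit (f a - e a) := by
    rw [Int.isUnit_iff_abs_eq, abs_sub_comm]
    exact ((h.2 a).resolve_left hne).2
  refine ⟨a, h.even_of_ne hne, hunit.unit, funext fun j => ?_⟩
  rcases eq_or_ne j a with rfl | hj
  · simp
  · have heq : e j = f j := not_ne_iff.1 (mt (hiff j).1 hj)
    simp [hj, heq]

theorem setOf_bounds_eq_image (e : Fin n → ℤ) :
    {f | cdim f = cdim e + 1 ∧ Bounds e f} =
      (fun p : Fin n × ℤˣ => e + Pi.single p.1 (p.2 : ℤ)) ''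
        (evenCoords e ×ˢ Finset.univ : Finset (Fin n × ℤˣ)) := by
  ext f
  constructor
  · rintro ⟨hdim, h⟩
    obtain ⟨a, ha, s, rfl⟩ := h.exists_eq_add_single hdim
    exact ⟨(a, s), by simpa [mem_evenCoords, Int.units_eq_one_or s] using ha, rfl⟩
  · rintro ⟨⟨a, s⟩, hp, rfl⟩
    have ha : Even (e a) := mem_evenCoords.1 (Finset.mem_product.1 (Finset.mem_coe.1 hp)).1
    exact ⟨cdim_add_single ha s, bounds_add_single ha s⟩

theorem add_single_injective (e : Fin n → ℤ) :
    Function.Injective fun p : Fin n × ℤˣ => e + Pi.single p.1 (p.2 : ℤ) := by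
  rintro ⟨a, s⟩ ⟨b, t⟩ h
  have hsingle : (Pi.single a (s : ℤ) : Fin n → ℤ) = Pi.single b (t : ℤ) := add_left_cancel h
  obtain rfl : a = b := by
    by_contra hab
    simpa [hab] using congrFun hsingle a
  simpa [Units.val_inj] using hsingle

theorem ncard_setOf_bounds (e : Fin n → ℤ) :
    {f | cdim f = cdim e + 1 ∧ Bounds e f}.ncard = 2 * (n - cdim e) := by
  have hcard := cdim_add_card_evenCoords e
  rw [setOf_bounds_eq_image, Set.ncard_image_of_injective _ (add_single_injective e),
    Set.ncard_coe_finset, Finset.card_product, Finset.card_univ, Fintype.card_units_int]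
  omega

theorem InterCell.opposite_of_even (h : InterCell v w e) (hv : IsVoxel v) (ha : Even (e a)) :
    v a = e a + 1 ∧ w a = e a - 1 ∨ v a = e a - 1 ∧ w a = e a + 1 := by
  rcases h a with ⟨-, heq⟩ | h
  · exact absurd ha (Int.not_even_iff_odd.2 (heq ▸ hv a))
  · omega

theorem InterCell.not_bounds_and_bounds (h : InterCell v w e) (hv : IsVoxel v)
    (hef : Bounds e f) : ¬ (Bounds f v ∧ Bounds f w) := by
  rintro ⟨hfv, hfw⟩
  obtain ⟨a, hne⟩ : ∃ a, e a ≠ f a :=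
    Function.ne_iff.1 fun heq => hef.1.ne (congrArg cdim heq)
  obtain ⟨hea, hfa⟩ := hef.ne_iff.1 hne
  have hopp := h.opposite_of_even hv hea
  have hva := hfv.apply_eq_of_odd hfa
  have hwa := hfw.apply_eq_of_odd hfa
  omega

theorem Bounds.add_single (h : Bounds e g) (ha : Even (e a)) {s : ℤˣ} (hs : g a = e a + s)
    (hdim : cdim e + 1 < cdim g) : Bounds (e + Pi.single a (s : ℤ)) g := by
  refine ⟨cdim_add_single ha s ▸ hdim, fun j => ?_⟩
  rcases eq_or_ne j a with rfl | hj
  · simp [hs]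
  · simpa [hj] using h.2 j

theorem InterCell.bounds_or_bounds (h : InterCell v w e) (hv : v ∈ Block e) (hw : w ∈ Block e)
    (hef : Bounds e f) (hdim : cdim f = cdim e + 1) (hlt : cdim f < n) :
    Bounds f v ∨ Bounds f w := by
  obtain ⟨a, ha, s, rfl⟩ := hef.exists_eq_add_single hdim
  have hside : v a = e a + s ∨ w a = e a + s := by
    have hopp := h.opposite_of_even hv.1 ha
    rcases Int.units_eq_one_or s with rfl | rfl <;> simp only [Units.val_one, Units.val_neg] <;>
      omega
  rw [hdim] at hlt
  exact hside.imp (fun hs => hv.2.add_single ha hs (hv.1.cdim_eq.symm ▸ hlt))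
    fun hs => hw.2.add_single ha hs (hw.1.cdim_eq.symm ▸ hlt)

theorem not_block_subset_of_interCell (hB : Block e ∩ D = {v, w}) (hI : InterCell v w e)
    (hef : Bounds e f) (hlt : cdim f < n) : ¬ Block f ⊆ D := by
  intro hsub
  have hpair : Block f ⊆ {v, w} := hB ▸ Set.subset_inter hef.block_subset hsub
  have hv : v ∈ Block f := by
    obtain ⟨x, hx, hne⟩ := (block_nontrivial hlt).exists_ne w
    exact (hpair hx).resolve_right hne ▸ hx
  have hw : w ∈ Block f := by
    obtain ⟨x, hx, hne⟩ := (block_nontrivial hlt).exists_ne v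
    exact (hpair hx).resolve_left hne ▸ hx
  exact hI.not_bounds_and_bounds hv.1 hef ⟨hv.2, hw.2⟩

theorem mem_freeCells_of_interCell (hB : Block e ∩ D = {v, w}) (hI : InterCell v w e)
    (hef : Bounds e f) (hdim : cdim f = cdim e + 1) (hlt : cdim f < n) :
    f ∈ FreeCells D (cdim e + 1) := by
  have hv : v ∈ Block e ∩ D := hB ▸ Set.mem_insert v {w}
  have hw : w ∈ Block e ∩ D := hB ▸ Set.mem_insert_of_mem v rfl
  refine ⟨⟨hdim, Or.inr ?_⟩, not_block_subset_of_interCell hB hI hef hlt⟩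
  exact (hI.bounds_or_bounds hv.1 hw.1 hef hdim hlt).elim (fun h => ⟨v, hv.2, h⟩)
    fun h => ⟨w, hw.2, h⟩

theorem bcount_of_hub_general (hB : Block e ∩ D = {v, w}) (hI : InterCell v w e)
    (hlt : cdim e + 1 < n) : bcount e D (cdim e + 1) = 2 * (n - cdim e) := by
  have hset : {f | f ∈ FreeCells D (cdim e + 1) ∧ Bounds e f} =
      {f | cdim f = cdim e + 1 ∧ Bounds e f} := by
    ext f
    exact and_congr_left fun hef => ⟨fun hf => hf.1.1, fun hdim =>
      mem_freeCells_of_interCell hB hI hef hdim (hdim ▸ hlt)⟩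
  rw [bcount, hset, ncard_setOf_bounds]

end

/-- If `e` is an `(n-2)`-hub of `D`, then `b_{n-1}(e, D) = 4`. -/
theorem bcount_of_hub (n : ℕ) (hn : 2 ≤ n) (D : Set (Fin n → ℤ))
    (hfin : D.Finite) (hvox : ∀ v ∈ D, IsVoxel v)
    (e : Fin n → ℤ) (he : IsHub D e) :
    bcount e D (n - 1) = 4 := by
  obtain ⟨hdim, v, w, -, hB, hI⟩ := he
  have hcount := bcount_of_hub_general hB hI (by omega)
  rwa [show cdim e + 1 = n - 1 by omega, show 2 * (n - cdim e) = 4 by omega] at hcount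

end DigitalGeometry
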